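/- arXiv:1704.04813 — 7 statements merged into one kernel-verified Lean document; each statement's English description precedes it below -/
import Mathlib

section
/- Supergradient inequality for the dual objective: fix ψ : Fin M → ℝ and let (D_i)_{i ∈ Fin M} be a measurable partition of D (pairwise disjoint measurable sets with union D) such that D_i ⊆ {v ∈ D : J v i − ψ i = ψᶜ(v)} for every i. Then for every ψ' : Fin M → ℝ, F(ψ') ≤ F(ψ) + Σ_{i ∈ Fin M} (ω i − (μ(D_i)).toReal) · (ψ' i − ψ i). -/
open MeasureTheory

/-- Supergradient inequality for the dual objective: if `(D_i)` is a measurable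
partition of `D` with `D_i` contained in the set where the minimum defining the
c-transform is attained at `i`, then `ω - μ(D_i)` is a supergradient of `F` at `ψ`. -/
theorem dual_objective_supergradient {D : Type*} [MeasurableSpace D]
    (μ : Measure D) [IsFiniteMeasure μ] (M : ℕ) (hM : 0 < M)
    (J : D → Fin M → ℝ) (hJ : ∀ i, Integrable (fun v => J v i) μ)
    (ω : Fin M → ℝ) (F : (Fin M → ℝ) → ℝ)
    (hF : ∀ ψ : Fin M → ℝ,
      F ψ = ∑ i, ψ i * ω i + ∫ v, (⨅ i, (J v i - ψ i)) ∂μ)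
    (ψ : Fin M → ℝ) (Dset : Fin M → Set D)
    (hmeas : ∀ i, MeasurableSet (Dset i))
    (hdisj : Pairwise (Function.onFun Disjoint Dset))
    (hcover : (⋃ i, Dset i) = Set.univ)
    (hsel : ∀ i, Dset i ⊆ {v | J v i - ψ i = ⨅ j, (J v j - ψ j)})
    (ψ' : Fin M → ℝ) :
    F ψ' ≤ F ψ + ∑ i, (ω i - (μ (Dset i)).toReal) * (ψ' i - ψ i) := by
  haveI : Nonempty (Fin M) := ⟨⟨0, hM⟩⟩
  have hint : ∀ φ : Fin M → ℝ, Integrable (fun v => ⨅ i, (J v i - φ i)) μ := by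
    intro φ
    have h : Integrable (Finset.univ.inf' Finset.univ_nonempty
        (fun (i : Fin M) (v : D) => J v i - φ i)) μ := by
      refine Finset.inf'_induction (p := fun f : D → ℝ => Integrable f μ) _ _
        (fun a ha b hb => ha.inf hb) ?_
      intro i _
      exact (hJ i).sub (integrable_const _)
    refine h.congr (Filter.Eventually.of_forall fun v => ?_)
    simp only [Finset.inf'_apply]
    exact Finset.inf'_univ_eq_ciInf _
  have hind : ∀ i, Integrable ((Dset i).indicator (fun _ => ψ' i - ψ i)) μ :=
    fun i => (integrable_const _).indicator (hmeas i)
  have hsum : Integrable (fun v => ∑ i, (Dset i).indicator (fun _ => ψ' i - ψ i) v) μ :=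
    integrable_finsetSum _ fun i _ => hind i
  have key : ∫ v, (⨅ i, (J v i - ψ' i)) ∂μ ≤
      ∫ v, ((⨅ i, (J v i - ψ i)) - ∑ i, (Dset i).indicator (fun _ => ψ' i - ψ i) v) ∂μ := by
    refine integral_mono (hint ψ') ((hint ψ).sub hsum) fun v => ?_
    obtain ⟨i, hi⟩ := Set.mem_iUnion.1 (hcover ▸ Set.mem_univ v : v ∈ ⋃ i, Dset i)
    have h1 : ∑ j, (Dset j).indicator (fun _ => ψ' j - ψ j) v = ψ' i - ψ i := by
      rw [Finset.sum_eq_single i]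
      · exact Set.indicator_of_mem hi _
      · intro j _ hj
        exact Set.indicator_of_notMem (fun h => Set.disjoint_left.1 (hdisj hj) h hi) _
      · simp
    have h2 : J v i - ψ i = ⨅ j, (J v j - ψ j) := hsel i hi
    have h3 : (⨅ j, (J v j - ψ' j)) ≤ J v i - ψ' i :=
      ciInf_le (Set.finite_range _).bddBelow i
    simp only [h1]
    linarith
  rw [integral_sub (hint ψ) hsum, integral_finsetSum _ fun i _ => hind i] at key
  have h4 : ∀ i, ∫ v, (Dset i).indicator (fun _ => ψ' i - ψ i) v ∂μ
      = (μ (Dset i)).toReal * (ψ' i - ψ i) := by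
    intro i
    rw [integral_indicator_const _ (hmeas i)]
    rfl
  simp only [h4] at key
  have h5 : ∑ i, (ω i - (μ (Dset i)).toReal) * (ψ' i - ψ i)
      = ∑ i, ψ' i * ω i - ∑ i, ψ i * ω i - ∑ i, (μ (Dset i)).toReal * (ψ' i - ψ i) := by
    rw [← Finset.sum_sub_distrib, ← Finset.sum_sub_distrib]
    exact Finset.sum_congr rfl fun i _ => by ring
  rw [hF, hF, h5]
  linarith
end

section
/- Derivative of the dual objective: fix ψ : Fin M → ℝ and i ∈ Fin M, let D_i = {v ∈ D : J v i − ψ i < J v j − ψ j for every j ≠ i}, and assume that the set of v ∈ D at which the minimum defining ψᶜ(v) is attained by more than one index has μ-measure zero. Then the real function t ↦ F(ψ + t • e_i), where e_i is the i-th standard basis vector, is differentiable at t = 0 with derivative ω i − (μ(D_i)).toReal. -/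
open MeasureTheory

theorem dod_inf_strict {M : ℕ} [Nonempty (Fin M)] (f : Fin M → ℝ) (k : Fin M)
    (h : ∀ j, f k ≤ f j) : (⨅ l, f l) = f k :=
  le_antisymm (ciInf_le (Set.finite_range f).bddBelow k) (le_ciInf h)

theorem dod_lip {M : ℕ} [Nonempty (Fin M)] (f g : Fin M → ℝ) (c : ℝ)
    (h : ∀ j, f j ≤ g j + c) : (⨅ l, f l) ≤ (⨅ l, g l) + c := by
  have : (⨅ l, f l) - c ≤ ⨅ l, g l := le_ciInf fun j => by
    have := ciInf_le (Set.finite_range f).bddBelow j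
    linarith [h j]
  linarith

/-- Derivative of the dual objective in the direction of the `i`-th standard basis
vector: if ties in the minimum defining the c-transform occur only on a μ-null set,
then `t ↦ F (ψ + t • e_i)` is differentiable at `0` with derivative
`ω i - μ(D_i)` where `D_i` is the strict-minimum cell of index `i`. -/
theorem dual_objective_deriv {D : Type*} [MeasurableSpace D]
    (μ : Measure D) [IsFiniteMeasure μ] (M : ℕ) (hM : 0 < M)
    (J : D → Fin M → ℝ) (hJint : ∀ i, Integrable (fun v => J v i) μ)
    (hJmeas : ∀ i, Measurable (fun v => J v i))
    (ω : Fin M → ℝ) (F : (Fin M → ℝ) → ℝ)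
    (hF : ∀ ψ : Fin M → ℝ,
      F ψ = ∑ i, ψ i * ω i + ∫ v, (⨅ i, (J v i - ψ i)) ∂μ)
    (ψ : Fin M → ℝ) (i : Fin M) (Di : Set D)
    (hDi : Di = {v | ∀ j, j ≠ i → J v i - ψ i < J v j - ψ j})
    (hties : μ {v | ∃ j k, j ≠ k ∧ J v j - ψ j = (⨅ l, (J v l - ψ l)) ∧
        J v k - ψ k = (⨅ l, (J v l - ψ l))} = 0) :
    HasDerivAt (fun t : ℝ => F (ψ + t • (Pi.single i 1 : Fin M → ℝ)))
      (ω i - (μ Di).toReal) 0 := by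
  haveI : Nonempty (Fin M) := ⟨i⟩
  have hDm : MeasurableSet Di := by
    rw [hDi]
    simp only [Set.setOf_forall]
    exact MeasurableSet.iInter fun j => MeasurableSet.iInter fun _ =>
      measurableSet_lt ((hJmeas i).sub_const _) ((hJmeas j).sub_const _)
  have hGm : ∀ φ : Fin M → ℝ, Measurable (fun v => ⨅ l, (J v l - φ l)) := fun φ =>
    Measurable.iInf fun l => (hJmeas l).sub_const _
  have hsing : ∀ l, |(Pi.single i 1 : Fin M → ℝ) l| ≤ 1 := by
    intro l
    by_cases h : l = i
    · subst h; simp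
    · simp [h]
  have key := hasDerivAt_integral_of_dominated_loc_of_lip (μ := μ) (𝕜 := ℝ) (E := ℝ)
    (F := fun (t : ℝ) v => ⨅ l, (J v l - (ψ + t • (Pi.single i 1 : Fin M → ℝ)) l))
    (x₀ := 0) (s := Set.univ) (bound := fun _ => 1)
    (F' := Di.indicator (fun _ => (-1 : ℝ))) Filter.univ_mem
    (Filter.Eventually.of_forall fun t => (hGm _).aestronglyMeasurable)
    (by
      have hb : Integrable (fun v => ∑ l, |J v l - (ψ + (0:ℝ) • (Pi.single i 1 : Fin M → ℝ)) l|) μ :=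
        integrable_finsetSum _ fun l _ => ((hJint l).sub (integrable_const _)).abs
      refine hb.mono' (hGm _).aestronglyMeasurable (Filter.Eventually.of_forall fun v => ?_)
      obtain ⟨k, hk⟩ := Finite.exists_min
        (fun l => J v l - (ψ + (0:ℝ) • (Pi.single i 1 : Fin M → ℝ)) l)
      rw [dod_inf_strict _ k hk, Real.norm_eq_abs]
      exact Finset.single_le_sum
        (f := fun l => |J v l - (ψ + (0:ℝ) • (Pi.single i 1 : Fin M → ℝ)) l|)
        (fun _ _ => abs_nonneg _) (Finset.mem_univ k))
    ((measurable_const.indicator hDm).aestronglyMeasurable)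
    (Filter.Eventually.of_forall fun v => by
      refine LipschitzOnWith.of_le_add_mul _ fun x _ y _ => ?_
      refine dod_lip _ _ _ fun j => ?_
      have h1 : (y - x) * (Pi.single i 1 : Fin M → ℝ) j ≤ |x - y| := by
        refine (le_abs_self _).trans ?_
        rw [abs_mul, abs_sub_comm]
        exact mul_le_of_le_one_right (abs_nonneg _) (hsing j)
      simp only [Pi.add_apply, Pi.smul_apply, smul_eq_mul, Real.dist_eq, Real.coe_nnabs, abs_one]
      linarith)
    (integrable_const _)
    (by
      have hae : ∀ᵐ v ∂μ, ¬ ∃ j k, j ≠ k ∧ J v j - ψ j = (⨅ l, (J v l - ψ l)) ∧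
        J v k - ψ k = (⨅ l, (J v l - ψ l)) := by
        rw [ae_iff]; simpa only [not_not] using hties
      filter_upwards [hae] with v hv
      obtain ⟨k, hk⟩ := Finite.exists_min (fun l => J v l - ψ l)
      have hinf := dod_inf_strict (fun l => J v l - ψ l) k hk
      have hlt : ∀ j, j ≠ k → J v k - ψ k < J v j - ψ j := by
        intro j hj
        refine lt_of_le_of_ne (hk j) fun he => hv ⟨j, k, hj, ?_, hinf.symm⟩
        rw [hinf]; exact he.symm
      have hev : ∀ᶠ t : ℝ in nhds 0, ∀ j,
          J v k - (ψ + t • (Pi.single i 1 : Fin M → ℝ)) k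
            ≤ J v j - (ψ + t • (Pi.single i 1 : Fin M → ℝ)) j := by
        rw [Filter.eventually_all]
        intro j
        by_cases hj : j = k
        · subst hj; exact Filter.Eventually.of_forall fun _ => le_rfl
        · have hc : ∀ l, Continuous fun t : ℝ =>
              J v l - (ψ + t • (Pi.single i 1 : Fin M → ℝ)) l := by
            intro l
            simp only [Pi.add_apply, Pi.smul_apply, smul_eq_mul]
            fun_prop
          have := (hc k).continuousAt.eventually_lt (x₀ := 0) (hc j).continuousAt
            (by simpa using hlt j hj)
          exact this.mono fun _ h => h.le
      have hval : Di.indicator (fun _ => (-1 : ℝ)) v = -(Pi.single i 1 : Fin M → ℝ) k := by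
        by_cases h : k = i
        · have : v ∈ Di := by rw [hDi]; intro j hj; subst h; exact hlt j hj
          rw [Set.indicator_of_mem this, h]; simp
        · have : v ∉ Di := by
            rw [hDi]; intro hm
            exact absurd (hm k h) (not_lt.mpr (hk i))
          rw [Set.indicator_of_notMem this]; simp [h]
      rw [hval]
      have hd : HasDerivAt (fun t : ℝ => J v k - (ψ + t • (Pi.single i 1 : Fin M → ℝ)) k)
          (-(Pi.single i 1 : Fin M → ℝ) k) 0 := by
        simp only [Pi.add_apply, Pi.smul_apply, smul_eq_mul]
        simpa using (((hasDerivAt_id (0:ℝ)).mul_const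
          ((Pi.single i 1 : Fin M → ℝ) k)).const_add (ψ k)).const_sub (J v k)
      exact hd.congr_of_eventuallyEq (hev.mono fun t ht => dod_inf_strict
        (fun l => J v l - (ψ + t • (Pi.single i 1 : Fin M → ℝ)) l) k ht))
  have hI : ∫ v, Di.indicator (fun _ => (-1 : ℝ)) v ∂μ = -(μ Di).toReal := by
    rw [integral_indicator hDm]; simp [Measure.real]
  have hlin : HasDerivAt (fun t : ℝ => ∑ l, (ψ + t • (Pi.single i 1 : Fin M → ℝ)) l * ω l)
      (ω i) 0 := by
    have he : (fun t : ℝ => ∑ l, (ψ + t • (Pi.single i 1 : Fin M → ℝ)) l * ω l)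
        = fun t => (∑ l, ψ l * ω l) + t * ω i := by
      funext t
      simp [add_mul, Finset.sum_add_distrib, Pi.single_apply]
    rw [he]
    simpa using ((hasDerivAt_id (0:ℝ)).mul_const (ω i)).const_add (∑ l, ψ l * ω l)
  have := hlin.add key.2
  rw [hI, ← sub_eq_add_neg] at this
  exact this.congr_of_eventuallyEq (Filter.Eventually.of_forall fun t => hF _)
end

section
/- Weak duality between the cell-partitioning problem and the dual objective: let (A_i)_{i ∈ Fin M} be a measurable partition of D (pairwise disjoint measurable sets with union D) satisfying the capacity constraints (μ(A_i)).toReal = ω i for every i. Then for every ψ : Fin M → ℝ, Σ_{i ∈ Fin M} ∫_{A_i} J v i dμ(v) ≥ F(ψ). -/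
open MeasureTheory

/-- Weak duality: the primal cost of any measurable partition `(A_i)` of `D`
satisfying the capacity constraints `μ(A_i) = ω i` is at least the dual
objective `F ψ`, for every `ψ`. -/
theorem cell_partition_weak_duality {D : Type*} [MeasurableSpace D]
    (μ : Measure D) [IsFiniteMeasure μ] (M : ℕ) (hM : 0 < M)
    (J : D → Fin M → ℝ) (hJint : ∀ i, Integrable (fun v => J v i) μ)
    (hJmeas : ∀ i, Measurable (fun v => J v i))
    (ω : Fin M → ℝ) (F : (Fin M → ℝ) → ℝ)
    (hF : ∀ ψ : Fin M → ℝ,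
      F ψ = ∑ i, ψ i * ω i + ∫ v, (⨅ i, (J v i - ψ i)) ∂μ)
    (A : Fin M → Set D)
    (hmeas : ∀ i, MeasurableSet (A i))
    (hdisj : Pairwise (Function.onFun Disjoint A))
    (hcover : (⋃ i, A i) = Set.univ)
    (hcap : ∀ i, (μ (A i)).toReal = ω i)
    (ψ : Fin M → ℝ) :
    F ψ ≤ ∑ i, ∫ v in A i, J v i ∂μ := by
  haveI : Nonempty (Fin M) := ⟨⟨0, hM⟩⟩
  have hgi : ∀ i, Integrable (fun v => J v i - ψ i) μ := fun i =>
    (hJint i).sub (integrable_const _)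
  have hint : Integrable (fun v => ⨅ i, (J v i - ψ i)) μ := by
    have hb : Integrable (fun v => ∑ i, |J v i - ψ i|) μ :=
      integrable_finsetSum _ fun i _ => (hgi i).abs
    refine hb.mono' (Measurable.iInf fun i =>
      (hJmeas i).sub measurable_const).aestronglyMeasurable (ae_of_all _ fun v => ?_)
    obtain ⟨i, hi⟩ := exists_eq_ciInf_of_finite (f := fun i => J v i - ψ i)
    rw [← hi, Real.norm_eq_abs]
    exact Finset.single_le_sum (f := fun i => |J v i - ψ i|)
      (fun j _ => abs_nonneg _) (Finset.mem_univ i)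
  rw [hF, ← setIntegral_univ, ← hcover,
    integral_iUnion_fintype hmeas hdisj (fun i => hint.integrableOn), ← Finset.sum_add_distrib]
  refine Finset.sum_le_sum fun i _ => ?_
  have h1 : ∫ v in A i, (⨅ i, (J v i - ψ i)) ∂μ ≤ ∫ v in A i, (J v i - ψ i) ∂μ :=
    integral_mono hint.integrableOn (hgi i).integrableOn fun v =>
      ciInf_le (Set.finite_range _).bddBelow i
  rw [integral_sub (hJint i).integrableOn (integrable_const _), setIntegral_const,
    Measure.real, hcap, smul_eq_mul] at h1
  linarith [mul_comm (ψ i) (ω i)]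
end

section
/- Optimality certificate for cell partitions: let ψ : Fin M → ℝ and let (A_i)_{i ∈ Fin M} be a measurable partition of D with (μ(A_i)).toReal = ω i for every i and with A_i ⊆ {v ∈ D : J v i − ψ i = ψᶜ(v)} for every i. Then Σ_{i ∈ Fin M} ∫_{A_i} J v i dμ(v) = F(ψ); consequently (A_i) minimizes the primal cost over all measurable partitions (A'_i) of D with (μ(A'_i)).toReal = ω i for every i, and ψ maximizes F over all ψ' : Fin M → ℝ. -/
open MeasureTheory

/-- Optimality certificate: if the measurable partition `(A_i)` satisfies the
capacity constraints and each `A_i` lies in the set where the minimum defining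
the c-transform is attained at `i`, then the primal cost equals `F ψ`;
consequently `(A_i)` is primal optimal and `ψ` is dual optimal. -/
theorem cell_partition_optimality_certificate {D : Type*} [MeasurableSpace D]
    (μ : Measure D) [IsFiniteMeasure μ] (M : ℕ) (hM : 0 < M)
    (J : D → Fin M → ℝ) (hJint : ∀ i, Integrable (fun v => J v i) μ)
    (hJmeas : ∀ i, Measurable (fun v => J v i))
    (ω : Fin M → ℝ) (F : (Fin M → ℝ) → ℝ)
    (hF : ∀ ψ : Fin M → ℝ,
      F ψ = ∑ i, ψ i * ω i + ∫ v, (⨅ i, (J v i - ψ i)) ∂μ)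
    (ψ : Fin M → ℝ) (A : Fin M → Set D)
    (hmeas : ∀ i, MeasurableSet (A i))
    (hdisj : Pairwise (Function.onFun Disjoint A))
    (hcover : (⋃ i, A i) = Set.univ)
    (hcap : ∀ i, (μ (A i)).toReal = ω i)
    (hsel : ∀ i, A i ⊆ {v | J v i - ψ i = ⨅ j, (J v j - ψ j)}) :
    (∑ i, ∫ v in A i, J v i ∂μ) = F ψ ∧
    (∀ A' : Fin M → Set D,
      (∀ i, MeasurableSet (A' i)) →
      Pairwise (Function.onFun Disjoint A') →
      (⋃ i, A' i) = Set.univ →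
      (∀ i, (μ (A' i)).toReal = ω i) →
      (∑ i, ∫ v in A i, J v i ∂μ) ≤ ∑ i, ∫ v in A' i, J v i ∂μ) ∧
    (∀ ψ' : Fin M → ℝ, F ψ' ≤ F ψ) := by
  have hne : Nonempty (Fin M) := ⟨⟨0, hM⟩⟩
  have hle : ∀ (φ : Fin M → ℝ) (v : D) (i : Fin M), (⨅ j, (J v j - φ j)) ≤ J v i - φ i :=
    fun φ v i => ciInf_le (Set.finite_range _).bddBelow i
  have hint : ∀ φ : Fin M → ℝ, Integrable (fun v => ⨅ j, (J v j - φ j)) μ := by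
    intro φ
    have hdom : Integrable (fun v => ∑ i, |J v i - φ i|) μ :=
      integrable_finsetSum _ fun i _ => ((hJint i).sub (integrable_const (φ i))).abs
    refine hdom.mono' ?_ (Filter.Eventually.of_forall fun v => ?_)
    · exact (Measurable.iInf fun i => (hJmeas i).sub_const (φ i)).aestronglyMeasurable
    · obtain ⟨i, hi⟩ := exists_eq_ciInf_of_finite (f := fun j => J v j - φ j)
      rw [← hi, Real.norm_eq_abs]
      exact Finset.single_le_sum (f := fun i => |J v i - φ i|)
        (fun i _ => abs_nonneg _) (Finset.mem_univ i)
  have key : ∀ (φ : Fin M → ℝ) (B : Fin M → Set D), (∀ i, MeasurableSet (B i)) →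
      Pairwise (Function.onFun Disjoint B) → (⋃ i, B i) = Set.univ →
      (∀ i, (μ (B i)).toReal = ω i) →
      F φ = ∑ i, ∫ v in B i, (φ i + ⨅ j, (J v j - φ j)) ∂μ := by
    intro φ B hB hd hc hw
    rw [hF, ← setIntegral_univ, ← hc,
      integral_iUnion_fintype hB hd (fun i => (hint φ).integrableOn), ← Finset.sum_add_distrib]
    refine Finset.sum_congr rfl fun i _ => ?_
    rw [integral_add (integrable_const _) (hint φ).integrableOn, setIntegral_const,
      Measure.real, hw i, smul_eq_mul, mul_comm]
  have weak : ∀ (φ : Fin M → ℝ) (B : Fin M → Set D), (∀ i, MeasurableSet (B i)) →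
      Pairwise (Function.onFun Disjoint B) → (⋃ i, B i) = Set.univ →
      (∀ i, (μ (B i)).toReal = ω i) →
      F φ ≤ ∑ i, ∫ v in B i, J v i ∂μ := by
    intro φ B hB hd hc hw
    rw [key φ B hB hd hc hw]
    refine Finset.sum_le_sum fun i _ => ?_
    refine integral_mono ((integrable_const _).add (hint φ).integrableOn)
      (hJint i).integrableOn fun v => ?_
    have := hle φ v i
    show φ i + (⨅ j, (J v j - φ j)) ≤ J v i
    linarith
  have heq : (∑ i, ∫ v in A i, J v i ∂μ) = F ψ := by
    rw [key ψ A hmeas hdisj hcover hcap]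
    refine Finset.sum_congr rfl fun i _ => ?_
    refine setIntegral_congr_fun (hmeas i) fun v hv => ?_
    have h : J v i - ψ i = ⨅ j, (J v j - ψ j) := hsel i hv
    show J v i = ψ i + (⨅ j, (J v j - ψ j))
    linarith
  refine ⟨heq, fun A' h1 h2 h3 h4 => ?_, fun ψ' => ?_⟩
  · rw [heq]
    exact weak ψ A' h1 h2 h3 h4
  · rw [← heq]
    exact weak ψ' A hmeas hdisj hcover hcap
end

section
/- Existence of a dual maximizer: assume μ is a probability measure, there is a constant K with |J v i| ≤ K for all v ∈ D and i ∈ Fin M, and ω i > 0 for all i with Σ_{i ∈ Fin M} ω i = 1. Then there exists ψ* : Fin M → ℝ such that F(ψ) ≤ F(ψ*) for every ψ : Fin M → ℝ. -/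
open MeasureTheory

/-- Existence of a dual maximizer: if `μ` is a probability measure, the cost
`J` is uniformly bounded, and the weights are positive and sum to one, then
the dual objective `F` attains its maximum at some `ψ*`. -/
theorem dual_maximizer_exists {D : Type*} [MeasurableSpace D]
    (μ : Measure D) [IsProbabilityMeasure μ] (M : ℕ) (hM : 0 < M)
    (J : D → Fin M → ℝ) (hJ : ∀ i, Integrable (fun v => J v i) μ)
    (K : ℝ) (hK : ∀ v : D, ∀ i : Fin M, |J v i| ≤ K)
    (ω : Fin M → ℝ) (hωpos : ∀ i, 0 < ω i) (hωsum : ∑ i, ω i = 1)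
    (F : (Fin M → ℝ) → ℝ)
    (hF : ∀ ψ : Fin M → ℝ,
      F ψ = ∑ i, ψ i * ω i + ∫ v, (⨅ i, (J v i - ψ i)) ∂μ) :
    ∃ ψstar : Fin M → ℝ, ∀ ψ : Fin M → ℝ, F ψ ≤ F ψstar := by
  have : Nonempty (Fin M) := ⟨⟨0, hM⟩⟩
  have hbdd : ∀ (ψ : Fin M → ℝ) v, BddBelow (Set.range fun i => J v i - ψ i) :=
    fun ψ v => (Set.finite_range _).bddBelow
  have hle : ∀ (ψ : Fin M → ℝ) v i, (⨅ i, (J v i - ψ i)) ≤ J v i - ψ i :=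
    fun ψ v i => ciInf_le (hbdd ψ v) i
  have hK0 : 0 ≤ K := by
    have : Nonempty D := μ.nonempty_of_neZero
    exact (abs_nonneg _).trans (hK (Classical.arbitrary D) ⟨0, hM⟩)
  have hmeas : ∀ ψ : Fin M → ℝ, AEMeasurable (fun v => ⨅ i, (J v i - ψ i)) μ := by
    intro ψ
    have h : ∀ i, AEMeasurable (fun v => J v i - ψ i) μ :=
      fun i => (hJ i).aemeasurable.sub_const _
    have e : (fun v => ⨅ i, (J v i - ψ i)) =
        (fun x : Fin M → ℝ => ⨅ i, x i) ∘ (fun v i => J v i - ψ i) := rfl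
    rw [e]
    refine Measurable.comp_aemeasurable ?_ (aemeasurable_pi_lambda _ h)
    exact Measurable.iInf fun i => measurable_pi_apply i
  have hψn : ∀ (ψ : Fin M → ℝ) i, |ψ i| ≤ ‖ψ‖ := fun ψ i => norm_le_pi_norm ψ i
  have hint : ∀ ψ : Fin M → ℝ, Integrable (fun v => ⨅ i, (J v i - ψ i)) μ := by
    intro ψ
    refine Integrable.of_bound (hmeas ψ).aestronglyMeasurable (K + ‖ψ‖) (ae_of_all _ fun v => ?_)
    rw [Real.norm_eq_abs, abs_le]
    constructor
    · refine le_ciInf fun i => ?_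
      have := abs_le.1 (hK v i)
      have := abs_le.1 (hψn ψ i)
      linarith
    · have h1 := hle ψ v ⟨0, hM⟩
      have := abs_le.1 (hK v ⟨0, hM⟩)
      have := abs_le.1 (hψn ψ ⟨0, hM⟩)
      linarith
  have hcont : Continuous F := by
    have hG : LipschitzWith 1 (fun ψ : Fin M → ℝ => ∫ v, (⨅ i, (J v i - ψ i)) ∂μ) := by
      refine LipschitzWith.of_le_add fun ψ φ => ?_
      have h1 : ∫ v, (⨅ i, (J v i - ψ i)) ∂μ ≤
          ∫ v, ((⨅ i, (J v i - φ i)) + dist ψ φ) ∂μ := by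
        refine integral_mono (hint ψ) ((hint φ).add (integrable_const _)) fun v => ?_
        have : (⨅ i, (J v i - ψ i)) - dist ψ φ ≤ ⨅ i, (J v i - φ i) := by
          refine le_ciInf fun i => ?_
          have h2 := hle ψ v i
          have h3 := dist_le_pi_dist ψ φ i
          rw [Real.dist_eq] at h3
          have := abs_le.1 h3
          linarith
        show (⨅ i, (J v i - ψ i)) ≤ (⨅ i, (J v i - φ i)) + dist ψ φ
        linarith
      rw [integral_add (hint φ) (integrable_const _)] at h1
      simpa using h1
    rw [funext hF]
    exact (by fun_prop : Continuous fun ψ : Fin M → ℝ => ∑ i, ψ i * ω i).add hG.continuous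
  have hshift : ∀ (ψ : Fin M → ℝ) (c : ℝ), F (fun i => ψ i - c) = F ψ := by
    intro ψ c
    have h1 : ∀ v, (⨅ i, (J v i - (ψ i - c))) = (⨅ i, (J v i - ψ i)) + c := by
      intro v
      rw [ciInf_add (hbdd ψ v)]
      congr 1
      ext i
      ring
    rw [hF, hF]
    simp only [h1]
    rw [integral_add (hint ψ) (integrable_const _)]
    simp only [sub_mul, Finset.sum_sub_distrib, ← Finset.mul_sum, hωsum]
    simp
  have hF0 : -K ≤ F 0 := by
    rw [hF]
    have : ∫ v, (-K) ∂μ ≤ ∫ v, (⨅ i, (J v i - (0 : Fin M → ℝ) i)) ∂μ := by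
      refine integral_mono (integrable_const _) (hint 0) fun v => le_ciInf fun i => ?_
      have := abs_le.1 (hK v i)
      simp only [Pi.zero_apply]
      linarith
    simpa using this
  have hcomp : IsCompact (Set.Icc (fun i => -(2 * K / ω i)) (0 : Fin M → ℝ)) := isCompact_Icc
  have h0mem : (0 : Fin M → ℝ) ∈ Set.Icc (fun i => -(2 * K / ω i)) (0 : Fin M → ℝ) := by
    refine ⟨fun i => ?_, le_rfl⟩
    have : 0 ≤ 2 * K / ω i := div_nonneg (by linarith) (hωpos i).le
    simpa using this
  obtain ⟨ψs, -, hmax⟩ := hcomp.exists_isMaxOn ⟨0, h0mem⟩ hcont.continuousOn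
  refine ⟨ψs, fun ψ => ?_⟩
  obtain ⟨j, hj⟩ := Finite.exists_max ψ
  rw [← hshift ψ (ψ j)]
  set φ : Fin M → ℝ := fun i => ψ i - ψ j with hφ
  have hφ0 : ∀ i, φ i ≤ 0 := fun i => sub_nonpos.2 (hj i)
  have hφj : φ j = 0 := sub_self _
  by_cases hmem : φ ∈ Set.Icc (fun i => -(2 * K / ω i)) (0 : Fin M → ℝ)
  · exact hmax hmem
  · have hex : ∃ i, φ i < -(2 * K / ω i) := by
      by_contra! hcon
      exact hmem ⟨hcon, hφ0⟩
    obtain ⟨i, hi⟩ := hex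
    have h1 : ∫ v, (⨅ i, (J v i - φ i)) ∂μ ≤ ∫ v, K ∂μ := by
      refine integral_mono (hint φ) (integrable_const _) fun v => ?_
      have h2 := hle φ v j
      have := abs_le.1 (hK v j)
      show (⨅ i, (J v i - φ i)) ≤ K
      linarith
    have h1' : ∫ v, (⨅ i, (J v i - φ i)) ∂μ ≤ K := by simpa using h1
    have h2 : ∑ k, φ k * ω k ≤ φ i * ω i := by
      rw [← Finset.add_sum_erase _ _ (Finset.mem_univ i)]
      have : ∑ k ∈ Finset.univ.erase i, φ k * ω k ≤ 0 :=
        Finset.sum_nonpos fun k _ => mul_nonpos_of_nonpos_of_nonneg (hφ0 k) (hωpos k).le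
      linarith
    have h3 : φ i * ω i ≤ -(2 * K) := by
      have h4 := mul_le_mul_of_nonneg_right hi.le (hωpos i).le
      have h5 : 2 * K / ω i * ω i = 2 * K := div_mul_cancel₀ _ (hωpos i).ne'
      linarith
    have h6 : F 0 ≤ F ψs := hmax h0mem
    have h7 := hF φ
    linarith
end

section
/- Optimal bandwidth allocation achieves the lower bound: let Y be a positive natural number, B > 0, and u, E : Fin Y → ℝ with u r > 0 and E r > 0 for all r. Define W* r = B · (u r / E r) / Σ_{k ∈ Fin Y} (u k / E k). Then W* r > 0 for all r, Σ_{r ∈ Fin Y} W* r = B, and u r / (W* r · E r) = (1/B) · Σ_{k ∈ Fin Y} u k / E k for every r. Consequently (1/B) · Σ_{r ∈ Fin Y} u r / E r is the least element of the set { max over r of u r / (W r · E r) : W : Fin Y → ℝ, W r > 0 for all r, Σ_r W r = B }. -/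
/-- The proportional bandwidth allocation `W* r = B * (u r / E r) / ∑ k, u k / E k`
is positive, sums to `B`, equalizes all service times at `(1/B) * ∑ k, u k / E k`,
and this common value is the least achievable max service time over all positive
allocations summing to `B`. -/
theorem optimal_bandwidth_allocation (Y : ℕ) (hY : 0 < Y) (B : ℝ) (hB : 0 < B)
    (u E : Fin Y → ℝ) (hu : ∀ r, 0 < u r) (hE : ∀ r, 0 < E r)
    (Wstar : Fin Y → ℝ)
    (hWstar : ∀ r, Wstar r = B * (u r / E r) / ∑ k, u k / E k) :
    (∀ r, 0 < Wstar r) ∧ (∑ r, Wstar r = B) ∧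
    (∀ r, u r / (Wstar r * E r) = (1 / B) * ∑ k, u k / E k) ∧
    IsLeast {T : ℝ | ∃ W : Fin Y → ℝ, (∀ r, 0 < W r) ∧ (∑ r, W r = B) ∧
        T = ⨆ r, u r / (W r * E r)}
      ((1 / B) * ∑ k, u k / E k) := by
  haveI : Nonempty (Fin Y) := ⟨⟨0, hY⟩⟩
  have hS : 0 < ∑ k, u k / E k :=
    Finset.sum_pos (fun r _ => div_pos (hu r) (hE r)) Finset.univ_nonempty
  have h1 : ∀ r, 0 < Wstar r := fun r => by
    rw [hWstar]
    exact div_pos (mul_pos hB (div_pos (hu r) (hE r))) hS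
  have h2 : ∑ r, Wstar r = B := by
    simp_rw [hWstar]
    rw [← Finset.sum_div, ← Finset.mul_sum]
    exact mul_div_cancel_right₀ B hS.ne'
  have h3 : ∀ r, u r / (Wstar r * E r) = (1 / B) * ∑ k, u k / E k := fun r => by
    rw [hWstar]
    generalize (∑ k, u k / E k) = S at hS
    have := hu r
    have := hE r
    field_simp
  refine ⟨h1, h2, h3, ⟨Wstar, h1, h2, ?_⟩, ?_⟩
  · simp_rw [h3]
    exact (ciSup_const).symm
  · rintro T ⟨W, hW, hsum, rfl⟩
    set T := ⨆ r, u r / (W r * E r) with hT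
    have hle : ∀ r, u r / E r ≤ T * W r := fun r => by
      have h : u r / (W r * E r) ≤ T :=
        le_ciSup (f := fun r => u r / (W r * E r)) (Set.finite_range _).bddAbove r
      rw [mul_comm (W r), ← div_div, div_le_iff₀ (hW r)] at h
      exact h
    have h : ∑ k, u k / E k ≤ T * B := by
      rw [← hsum, Finset.mul_sum]
      exact Finset.sum_le_sum (fun r _ => hle r)
    rw [one_div, inv_mul_eq_div, div_le_iff₀ hB]
    exact h
end

section
/- Exchange inequality at an optimal partition: let (D, 𝒜, μ) be a measure space with μ a finite measure, M a positive natural number, h : Fin M → D → ℝ with each h i μ-integrable and measurable, and g : Fin M → ℝ → ℝ. Define the cost of a measurable partition (A_i)_{i ∈ Fin M} of D as C(A) = Σ_{i ∈ Fin M} ( ∫_{A_i} h i dμ + g i ((μ(A_i)).toReal) ). Suppose (A_i) minimizes C over all measurable partitions of D. Then for all l ≠ m in Fin M and every measurable set S ⊆ A_m: ∫_S h m dμ + g m ((μ(A_m)).toReal) + g l ((μ(A_l)).toReal) ≤ ∫_S h l dμ + g l ((μ(A_l)).toReal + (μ(S)).toReal) + g m ((μ(A_m)).toReal − (μ(S)).toReal).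 -/
open MeasureTheory

/-- Exchange inequality at an optimal partition: if `(A_i)` minimizes the total
cost `∑ i, (∫_{A_i} h i dμ + g i (μ(A_i)))` over all measurable partitions of
`D`, then moving any measurable subset `S ⊆ A_m` to cell `l` cannot decrease
the cost. -/
theorem optimal_partition_exchange_inequality {D : Type*} [MeasurableSpace D]
    (μ : Measure D) [IsFiniteMeasure μ] (M : ℕ) (hM : 0 < M)
    (h : Fin M → D → ℝ)
    (hint : ∀ i, Integrable (h i) μ) (hmeas : ∀ i, Measurable (h i))
    (g : Fin M → ℝ → ℝ)
    (A : Fin M → Set D)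
    (hAmeas : ∀ i, MeasurableSet (A i))
    (hAdisj : Pairwise (Function.onFun Disjoint A))
    (hAcover : (⋃ i, A i) = Set.univ)
    (hopt : ∀ A' : Fin M → Set D,
      (∀ i, MeasurableSet (A' i)) →
      Pairwise (Function.onFun Disjoint A') →
      (⋃ i, A' i) = Set.univ →
      (∑ i, ((∫ v in A i, h i v ∂μ) + g i ((μ (A i)).toReal))) ≤
        ∑ i, ((∫ v in A' i, h i v ∂μ) + g i ((μ (A' i)).toReal)))
    (l m : Fin M) (hlm : l ≠ m)
    (S : Set D) (hS : MeasurableSet S) (hSm : S ⊆ A m) :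
    (∫ v in S, h m v ∂μ) + g m ((μ (A m)).toReal) + g l ((μ (A l)).toReal) ≤
      (∫ v in S, h l v ∂μ) + g l ((μ (A l)).toReal + (μ S).toReal) +
        g m ((μ (A m)).toReal - (μ S).toReal) := by
  classical
  have hdisj : ∀ i j, i ≠ j → ∀ x, x ∈ A i → x ∈ A j → False := fun i j hij x hi hj =>
    Set.disjoint_left.mp (hAdisj hij) hi hj
  let A' : Fin M → Set D := fun i => if i = l then A l ∪ S else if i = m then A m \ S else A i
  have hl' : A' l = A l ∪ S := by simp [A']
  have hm' : A' m = A m \ S := by simp [A', hlm.symm]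
  have ho' : ∀ i, i ≠ l → i ≠ m → A' i = A i := fun i h1 h2 => by simp [A', h1, h2]
  have hmem : ∀ i x, x ∈ A' i ↔ (x ∈ S ∧ i = l) ∨ (x ∉ S ∧ x ∈ A i) := by
    intro i x
    by_cases h1 : i = l
    · subst h1
      rw [hl', Set.mem_union]
      tauto
    by_cases h2 : i = m
    · subst h2
      rw [hm', Set.mem_diff]
      tauto
    rw [ho' i h1 h2]
    have : x ∈ A i → x ∉ S := fun hx hs => hdisj i m h2 x hx (hSm hs)
    tauto
  have key := hopt A' ?_ ?_ ?_
  · have hml : m ∈ Finset.univ.erase l := Finset.mem_erase.mpr ⟨hlm.symm, Finset.mem_univ _⟩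
    rw [← Finset.add_sum_erase _ _ (Finset.mem_univ l), ← Finset.add_sum_erase _ _ hml,
      ← Finset.add_sum_erase _ (fun i => (∫ v in A' i, h i v ∂μ) + g i ((μ (A' i)).toReal))
        (Finset.mem_univ l),
      ← Finset.add_sum_erase _ (fun i => (∫ v in A' i, h i v ∂μ) + g i ((μ (A' i)).toReal)) hml]
      at key
    have hrest : ∑ i ∈ (Finset.univ.erase l).erase m,
          ((∫ v in A' i, h i v ∂μ) + g i ((μ (A' i)).toReal)) =
        ∑ i ∈ (Finset.univ.erase l).erase m,
          ((∫ v in A i, h i v ∂μ) + g i ((μ (A i)).toReal)) := by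
      refine Finset.sum_congr rfl fun i hi => ?_
      simp only [Finset.mem_erase] at hi
      rw [ho' i hi.2.1 hi.1]
    have hd : Disjoint (A l) S := (hAdisj hlm).mono_right hSm
    have e1 : ∫ v in A l ∪ S, h l v ∂μ = (∫ v in A l, h l v ∂μ) + ∫ v in S, h l v ∂μ :=
      setIntegral_union hd hS (hint l).integrableOn (hint l).integrableOn
    have e2 : ∫ v in A m \ S, h m v ∂μ = (∫ v in A m, h m v ∂μ) - ∫ v in S, h m v ∂μ :=
      integral_diff hS (hint m).integrableOn hSm
    have e3 : (μ (A l ∪ S)).toReal = (μ (A l)).toReal + (μ S).toReal :=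
      measureReal_union hd hS
    have e4 : (μ (A m \ S)).toReal = (μ (A m)).toReal - (μ S).toReal :=
      measureReal_diff hSm hS
    simp only [hrest, hl', hm', e1, e2, e3, e4] at key
    linarith
  · intro i
    by_cases h1 : i = l
    · subst h1
      rw [hl']
      exact (hAmeas _).union hS
    by_cases h2 : i = m
    · subst h2
      rw [hm']
      exact (hAmeas _).diff hS
    rw [ho' i h1 h2]
    exact hAmeas i
  · intro i j hij
    refine Set.disjoint_left.mpr fun x hx hy => ?_
    rw [hmem] at hx hy
    rcases hx with ⟨a, b⟩ | ⟨a, b⟩ <;> rcases hy with ⟨c, d⟩ | ⟨c, d⟩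
    · exact hij (b.trans d.symm)
    · exact c a
    · exact a c
    · exact hdisj i j hij x b d
  · refine Set.eq_univ_of_forall fun x => Set.mem_iUnion.mpr ?_
    by_cases hx : x ∈ S
    · exact ⟨l, (hmem l x).mpr (Or.inl ⟨hx, rfl⟩)⟩
    · obtain ⟨i, hi⟩ := Set.mem_iUnion.mp (hAcover.symm ▸ Set.mem_univ x : x ∈ ⋃ i, A i)
      exact ⟨i, (hmem i x).mpr (Or.inr ⟨hx, hi⟩)⟩
end
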